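/- For all nonnegative integers i, j, k with i + j + k ≥ 1 there exist constants C(i,j,k) > 0 and ε(i,j,k) ∈ (0,1) such that: for all λ_A, λ_B > 1 and all θ ∈ (0, π/2) with (π/2 − θ)⁻¹ ≤ ε(i,j,k)·λ_A², the function φ(λ_A, λ_B, θ) = −(1/2)(π/2 − arctan(a·cot θ + b·tan θ)) satisfies |∂^{i+j+k} φ / (∂θ^i ∂λ_A^j ∂λ_B^k)| ≤ C(i,j,k)·(π/2 − θ)^{−i−1}·λ_A^{−2−j}·λ_B^{−k}. -/

import Mathlib

open Real

/-- a = (λ_A²λ_B² − λ_A⁻²λ_B⁻²)/(2(λ_B² − λ_B⁻²)). -/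
noncomputable def aCoef (lA lB : ℝ) : ℝ :=
  (lA ^ 2 * lB ^ 2 - lA⁻¹ ^ 2 * lB⁻¹ ^ 2) / (2 * (lB ^ 2 - lB⁻¹ ^ 2))

/-- b = (λ_A²λ_B⁻² − λ_A⁻²λ_B²)/(2(λ_B² − λ_B⁻²)). -/
noncomputable def bCoef (lA lB : ℝ) : ℝ :=
  (lA ^ 2 * lB⁻¹ ^ 2 - lA⁻¹ ^ 2 * lB ^ 2) / (2 * (lB ^ 2 - lB⁻¹ ^ 2))

/-- φ(λ_A, λ_B, θ) = −(1/2)(π/2 − arctan(a·cot θ + b·tan θ)) on θ ∈ (0, π/2). -/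
noncomputable def phiS (lA lB θ : ℝ) : ℝ :=
  -(1 / 2) * (π / 2 - Real.arctan (aCoef lA lB * Real.cot θ + bCoef lA lB * Real.tan θ))

/-!
Put `τ = π / 2 - θ`, `t = 1 - tanh (2 log λ_B)` and `μ = λ_A⁻² τ⁻¹`, so that the hypothesis makes
`μ` small. Then `tan (-2φ) = 2 (1 - t) sin 2θ / (λ_A ^ 2 E)` with a denominator `E` bounded below
by a multiple of `τ ^ 2 + t`, hence `tan (-2φ)` is `μ` times a bounded function.

The quotient `φ / μ` belongs to a finitely generated algebra of bounded functions which is stable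
under the vector fields `λ_A ∂/∂λ_A`, `λ_B ∂/∂λ_B` and `τ ∂/∂θ`. The key point for stability is that
the logarithmic derivatives of `E` are polynomials in the bounded functions `τ ^ 2 / E`, `t / E`,
`sin 2θ / τ`, `cos 2θ`, `τ`, `t` and `μ`. Each partial derivative therefore costs exactly one factor
`λ_A⁻¹`, `λ_B⁻¹` or `τ⁻¹`, starting from the size `μ` of `φ` itself.
-/

open scoped Asymptotics Filter

section DerivAlong

variable {𝕜 E : Type*} [NontriviallyNormedField 𝕜]

/-- `f'` is the derivative of `f` along the vector field `V` at every point of `U`. -/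
def HasDerivAlong [AddCommGroup E] [Module 𝕜 E] (U : Set E) (V : E → E) (f f' : E → 𝕜) : Prop :=
  ∀ p ∈ U, HasLineDerivAt 𝕜 f (f' p) p (V p)

/-- `a` is the logarithmic derivative of `f` along the vector field `V` on `U`, in the
multiplicative form `V f = f * a`, which makes sense also at the zeros of `f`. -/
def HasLogDerivAlong [AddCommGroup E] [Module 𝕜 E] (U : Set E) (V : E → E) (f a : E → 𝕜) : Prop :=
  HasDerivAlong U V f (f * a)

namespace HasDerivAlong

section Module

variable [AddCommGroup E] [Module 𝕜 E] {U : Set E} {V : E → E} {f f' g g' : E → 𝕜}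

theorem congr_deriv (hf : HasDerivAlong U V f f') (h : Set.EqOn f' g' U) :
    HasDerivAlong U V f g' := fun p hp => h hp ▸ hf p hp

theorem const (c : 𝕜) : HasDerivAlong U V (fun _ => c) 0 :=
  fun _ _ => hasDerivAt_const 0 c

theorem linearMap (ℓ : E →ₗ[𝕜] 𝕜) : HasDerivAlong U V ℓ (fun p => ℓ (V p)) := fun p _ => by
  simpa [HasLineDerivAt] using ((hasDerivAt_id (0 : 𝕜)).mul_const (ℓ (V p))).const_add (ℓ p)

theorem add (hf : HasDerivAlong U V f f') (hg : HasDerivAlong U V g g') :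
    HasDerivAlong U V (f + g) (f' + g') := fun p hp => HasDerivAt.add (hf p hp) (hg p hp)

theorem const_sub (c : 𝕜) (hf : HasDerivAlong U V f f') :
    HasDerivAlong U V (fun p => c - f p) (-f') := fun p hp => HasDerivAt.const_sub c (hf p hp)

theorem mul (hf : HasDerivAlong U V f f') (hg : HasDerivAlong U V g g') :
    HasDerivAlong U V (f * g) (f' * g + f * g') := fun p hp =>
  (HasDerivAt.mul (hf p hp) (hg p hp)).congr_deriv (by simp)

theorem comp {φ : 𝕜 → 𝕜} {φ' : E → 𝕜} (hf : HasDerivAlong U V f f')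
    (hφ : ∀ p ∈ U, HasDerivAt φ (φ' p) (f p)) :
    HasDerivAlong U V (fun p => φ (f p)) (φ' * f') := fun p hp =>
  HasDerivAt.comp_of_eq (0 : 𝕜) (hφ p hp) (hf p hp) (by simp)

end Module

theorem congr_of_eqOn [NormedAddCommGroup E] [NormedSpace 𝕜 E] {U : Set E} {V : E → E}
    {f f' g : E → 𝕜} (hU : IsOpen U) (hf : HasDerivAlong U V f f') (h : Set.EqOn g f U) :
    HasDerivAlong U V g f' := fun p hp =>
  (hf p hp).congr_of_eventuallyEq (h.eventuallyEq_of_mem (hU.mem_nhds hp))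

theorem exists_of_mem_adjoin [AddCommGroup E] [Module 𝕜 E] {U : Set E} {V : E → E}
    {S : Set (E → 𝕜)}
    (hS : ∀ s ∈ S, ∃ s' ∈ Algebra.adjoin 𝕜 S, HasDerivAlong U V s s')
    {f : E → 𝕜} (hf : f ∈ Algebra.adjoin 𝕜 S) :
    ∃ f' ∈ Algebra.adjoin 𝕜 S, HasDerivAlong U V f f' := by
  induction hf using Algebra.adjoin_induction with
  | mem s hs => exact hS s hs
  | algebraMap c => exact ⟨0, zero_mem _, const c⟩
  | add f g _ _ ihf ihg =>
    obtain ⟨f', hf', hff'⟩ := ihf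
    obtain ⟨g', hg', hgg'⟩ := ihg
    exact ⟨f' + g', add_mem hf' hg', hff'.add hgg'⟩
  | mul f g hf hg ihf ihg =>
    obtain ⟨f', hf', hff'⟩ := ihf
    obtain ⟨g', hg', hgg'⟩ := ihg
    exact ⟨f' * g + f * g', add_mem (mul_mem hf' hg) (mul_mem hf hg'), hff'.mul hgg'⟩

end HasDerivAlong

namespace HasLogDerivAlong

variable [AddCommGroup E] [Module 𝕜 E] {U : Set E} {V : E → E} {f a g b : E → 𝕜}

theorem congr (hf : HasLogDerivAlong U V f a) (h : Set.EqOn a b U) : HasLogDerivAlong U V f b :=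
  hf.congr_deriv fun p hp => by simp only [Pi.mul_apply, h hp]

theorem mul (hf : HasLogDerivAlong U V f a) (hg : HasLogDerivAlong U V g b) :
    HasLogDerivAlong U V (f * g) (a + b) :=
  (HasDerivAlong.mul hf hg).congr_deriv fun p _ => by
    simp only [Pi.add_apply, Pi.mul_apply]; ring

theorem zpow (n : ℤ) (hf : HasLogDerivAlong U V f a) (hf₀ : ∀ p ∈ U, f p ≠ 0) :
    HasLogDerivAlong U V (f ^ n) (fun p => n * a p) :=
  (HasDerivAlong.comp (φ := (· ^ n)) hf fun p hp =>
    hasDerivAt_zpow n (f p) (.inl (hf₀ p hp))).congr_deriv fun p hp => by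
      simp only [Pi.mul_apply, Pi.pow_apply, zpow_sub_one₀ (hf₀ p hp)]
      field_simp [hf₀ p hp]

theorem inv (hf : HasLogDerivAlong U V f a) (hf₀ : ∀ p ∈ U, f p ≠ 0) :
    HasLogDerivAlong U V f⁻¹ (-a) := by
  simpa [Pi.neg_def] using hf.zpow (-1) hf₀

end HasLogDerivAlong

theorem deriv_comp_line [AddCommGroup E] [Module 𝕜 E] {f : E → 𝕜} {f' s : 𝕜} {p v : E}
    (hf : HasLineDerivAt 𝕜 f f' p (s • v)) (hs : s ≠ 0) (a : 𝕜) :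
    deriv (fun x => f (p + (x - a) • v)) a = f' / s := by
  have hv : HasLineDerivAt 𝕜 f (f' / s) p v := by
    simpa [hs, div_eq_inv_mul] using hf.smul s⁻¹
  rw [HasLineDerivAt, ← sub_self a] at hv
  exact (hv.comp_sub_const a a).deriv

theorem isBigO_one_of_mem_adjoin {α : Type*} {l : Filter α} {S : Set (α → 𝕜)}
    (hS : ∀ s ∈ S, s =O[l] (1 : α → ℝ)) {f : α → 𝕜} (hf : f ∈ Algebra.adjoin 𝕜 S) :
    f =O[l] (1 : α → ℝ) := by
  induction hf using Algebra.adjoin_induction with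
  | mem s hs => exact hS s hs
  | algebraMap c => exact Asymptotics.isBigO_const_const c one_ne_zero l
  | add f g _ _ ihf ihg => exact ihf.add ihg
  | mul f g _ _ ihf ihg => exact (ihf.mul ihg).congr_right fun _ => mul_one 1

end DerivAlong

theorem abs_arctan_le_abs (x : ℝ) : |arctan x| ≤ |x| := by
  wlog hx : 0 ≤ x generalizing x
  · simpa only [arctan_neg, abs_neg] using this (-x) (by linarith)
  rw [abs_of_nonneg hx, abs_of_nonneg (arctan_nonneg.2 hx)]
  simpa only [tan_arctan] using le_tan (arctan_nonneg.2 hx) (arctan_lt_pi_div_two x)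

namespace phiS

/-- The parameter space of triples `(λ_A, λ_B, θ)`. -/
abbrev Param := ℝ × ℝ × ℝ

/-- The open set of parameters on which all estimates hold, with the smallness condition
`(π / 2 - θ)⁻¹ < λ_A ^ 2 / 4` written without inverses. -/
def region : Set Param :=
  {p | 0 < p.1 ∧ 1 < p.2.1 ∧ 0 < p.2.2 ∧ p.2.2 < π / 2 ∧ 4 < p.1 ^ 2 * (π / 2 - p.2.2)}

/-- The vector field `α λ_A ∂/∂λ_A + β λ_B ∂/∂λ_B + γ (π / 2 - θ) ∂/∂θ`, whose three components
are the partial derivatives rescaled so as to preserve boundedness. -/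
noncomputable def eulerField (α β γ : ℝ) (p : Param) : Param :=
  (α * p.1, β * p.2.1, γ * (π / 2 - p.2.2))

/-- The angle `τ = π / 2 - θ`. -/
noncomputable def coangle (p : Param) : ℝ := π / 2 - p.2.2

/-- The function `cos 2θ`. -/
noncomputable def cosDouble (p : Param) : ℝ := cos (2 * p.2.2)

/-- The function `sin 2θ / τ`, which stays bounded as `τ → 0`. -/
noncomputable def sinDoubleDiv (p : Param) : ℝ := sin (2 * p.2.2) / coangle p

/-- The function `1 - tanh (2 log λ_B) = 2 / (λ_B ^ 4 + 1)`. -/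
noncomputable def tanhDefect (p : Param) : ℝ := 2 / (p.2.1 ^ 4 + 1)

/-- The small parameter `μ = λ_A⁻² τ⁻¹` of the region. -/
noncomputable def smallness (p : Param) : ℝ := p.1 ^ (-2 : ℤ) * coangle p ^ (-1 : ℤ)

/-- The denominator `E` in `tan (-2φ) = 2 (1 - t) sin 2θ / (λ_A ^ 2 E)`, where `t` is
`tanhDefect`. It degenerates as `τ` and `t` both tend to `0`. -/
noncomputable def denom (p : Param) : ℝ :=
  1 - p.1 ^ (-4 : ℤ) + (1 - tanhDefect p) * (1 + p.1 ^ (-4 : ℤ)) * cosDouble p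

/-- The quotient `τ ^ 2 / E`. -/
noncomputable def coangleSqDivDenom (p : Param) : ℝ := coangle p ^ 2 * (denom p)⁻¹

/-- The quotient `t / E`. -/
noncomputable def defectDivDenom (p : Param) : ℝ := tanhDefect p * (denom p)⁻¹

/-- The function `tan (-2φ) / μ`. -/
noncomputable def tanDiv : Param → ℝ :=
  (2 : ℝ) • ((1 - tanhDefect) * sinDoubleDiv * coangleSqDivDenom)

/-- The function `tan (-2φ)`. -/
noncomputable def tanNegTwoPhi : Param → ℝ := smallness * tanDiv

/-- The function `cos (2φ) ^ 2`. -/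
noncomputable def cosSqTwoPhi (p : Param) : ℝ := (1 + tanNegTwoPhi p ^ 2)⁻¹

/-- The rescaled angle `-2φ / μ`. -/
noncomputable def rescaledPhi (p : Param) : ℝ := arctan (tanNegTwoPhi p) * (smallness p)⁻¹

section Bounds

variable {p : Param}

theorem isOpen_region : IsOpen region := by
  simp only [region, Set.ofPred_and]
  exact (isOpen_lt (by fun_prop) (by fun_prop)).inter <|
    (isOpen_lt (by fun_prop) (by fun_prop)).inter <|
      (isOpen_lt (by fun_prop) (by fun_prop)).inter <|
        (isOpen_lt (by fun_prop) (by fun_prop)).inter <| isOpen_lt (by fun_prop) (by fun_prop)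

theorem fst_pos (hp : p ∈ region) : 0 < p.1 := hp.1

theorem snd_pos (hp : p ∈ region) : 0 < p.2.1 := one_pos.trans hp.2.1

theorem coangle_pos (hp : p ∈ region) : 0 < coangle p := sub_pos.2 hp.2.2.2.1

theorem coangle_lt_pi_div_two (hp : p ∈ region) : coangle p < π / 2 := sub_lt_self _ hp.2.2.1

theorem coangle_sq_le (hp : p ∈ region) : coangle p ^ 2 ≤ 5 / 2 := by
  nlinarith [coangle_pos hp, coangle_lt_pi_div_two hp, pi_lt_d2]

theorem smallness_pos (hp : p ∈ region) : 0 < smallness p := by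
  have := fst_pos hp
  have := coangle_pos hp
  unfold smallness
  positivity

theorem smallness_lt (hp : p ∈ region) : smallness p < 1 / 4 := by
  have hA := fst_pos hp
  have hτ := coangle_pos hp
  have hμ : smallness p = (p.1 ^ 2 * coangle p)⁻¹ := by
    rw [smallness, mul_inv, zpow_neg_one, zpow_neg, zpow_ofNat]
  rw [hμ, inv_lt_comm₀ (by positivity) (by norm_num)]
  simpa only [one_div, inv_inv, coangle] using hp.2.2.2.2

theorem fst_zpow_neg_four (hp : p ∈ region) : p.1 ^ (-4 : ℤ) = (smallness p * coangle p) ^ 2 := by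
  have hA := fst_pos hp
  have hτ := coangle_pos hp
  simp only [smallness, zpow_neg, zpow_ofNat]
  field_simp

theorem tanhDefect_pos (p : Param) : 0 < tanhDefect p := by unfold tanhDefect; positivity

theorem tanhDefect_lt_one (hp : p ∈ region) : tanhDefect p < 1 := by
  rw [tanhDefect, div_lt_one (by positivity)]
  linarith [one_lt_pow₀ hp.2.1 four_ne_zero]

theorem sin_coangle_sq_ge (hp : p ∈ region) : 3 / 8 * coangle p ^ 2 ≤ sin (coangle p) ^ 2 := by
  have hτ := coangle_pos hp
  have hπ : (5 / 8 : ℝ) ≤ 2 / π := by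
    rw [le_div_iff₀ pi_pos]; linarith [pi_lt_d2]
  have hsin : 5 / 8 * coangle p ≤ sin (coangle p) :=
    (mul_le_mul_of_nonneg_right hπ hτ.le).trans (mul_le_sin hτ.le (coangle_lt_pi_div_two hp).le)
  calc 3 / 8 * coangle p ^ 2 ≤ (5 / 8 * coangle p) ^ 2 := by nlinarith
    _ ≤ sin (coangle p) ^ 2 := by gcongr

theorem denom_eq_convexCombination (p : Param) :
    denom p = (1 - tanhDefect p) *
        (2 * (sin (coangle p) ^ 2 - p.1 ^ (-4 : ℤ) * (1 - sin (coangle p) ^ 2))) +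
      tanhDefect p * (1 - p.1 ^ (-4 : ℤ)) := by
  rw [denom, cosDouble, coangle, sin_pi_div_two_sub, cos_two_mul]
  ring

theorem denom_ge (hp : p ∈ region) :
    (1 - tanhDefect p) * (coangle p ^ 2 / 2) + tanhDefect p / 2 ≤ denom p := by
  have hτ := coangle_pos hp
  have hμ := smallness_pos hp
  have hμ_sq : smallness p ^ 2 ≤ 1 / 16 := by nlinarith [smallness_lt hp]
  have hr : p.1 ^ (-4 : ℤ) ≤ 1 / 16 * coangle p ^ 2 := by
    rw [fst_zpow_neg_four hp, mul_pow]
    gcongr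
  have hr₀ : 0 ≤ p.1 ^ (-4 : ℤ) := by have := fst_pos hp; positivity
  have hτ_sq := coangle_sq_le hp
  have ht := tanhDefect_pos p
  have ht₁ := tanhDefect_lt_one hp
  rw [denom_eq_convexCombination, div_eq_mul_inv (tanhDefect p)]
  gcongr
  · nlinarith [sin_coangle_sq_ge hp, mul_nonneg hr₀ (sq_nonneg (sin (coangle p)))]
  · linarith

theorem coangle_sq_le_denom (hp : p ∈ region) : coangle p ^ 2 ≤ 5 * denom p := by
  nlinarith [denom_ge hp, coangle_sq_le hp, tanhDefect_pos p, tanhDefect_lt_one hp,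
    sq_nonneg (coangle p)]

theorem tanhDefect_le_denom (hp : p ∈ region) : tanhDefect p ≤ 2 * denom p := by
  nlinarith [denom_ge hp, tanhDefect_lt_one hp, sq_nonneg (coangle p)]

theorem denom_pos (hp : p ∈ region) : 0 < denom p := by
  linarith [tanhDefect_pos p, tanhDefect_le_denom hp]

theorem abs_sinDoubleDiv_le (hp : p ∈ region) : |sinDoubleDiv p| ≤ 2 := by
  have hτ := coangle_pos hp
  have hsin : sin (2 * p.2.2) = sin (2 * coangle p) := by
    rw [← sin_pi_sub, coangle]
    congr 1
    ring
  rw [sinDoubleDiv, abs_div, abs_of_pos hτ, div_le_iff₀ hτ, hsin]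
  simpa [abs_of_pos hτ] using abs_sin_le_abs (x := 2 * coangle p)

theorem abs_coangleSqDivDenom_le (hp : p ∈ region) : |coangleSqDivDenom p| ≤ 5 := by
  have hE := denom_pos hp
  rw [coangleSqDivDenom, abs_of_nonneg (by positivity), ← div_eq_mul_inv, div_le_iff₀ hE]
  exact coangle_sq_le_denom hp

theorem abs_defectDivDenom_le (hp : p ∈ region) : |defectDivDenom p| ≤ 2 := by
  have hE := denom_pos hp
  have ht := tanhDefect_pos p
  rw [defectDivDenom, abs_of_pos (by positivity), ← div_eq_mul_inv, div_le_iff₀ hE]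
  exact tanhDefect_le_denom hp

theorem abs_cosSqTwoPhi_le (p : Param) : |cosSqTwoPhi p| ≤ 1 := by
  rw [cosSqTwoPhi, abs_of_pos (by positivity)]
  exact inv_le_one_of_one_le₀ (by linarith [sq_nonneg (tanNegTwoPhi p)])

theorem abs_rescaledPhi_le (hp : p ∈ region) : |rescaledPhi p| ≤ |tanDiv p| := by
  have hμ := smallness_pos hp
  rw [rescaledPhi, ← div_eq_mul_inv, abs_div, abs_of_pos hμ, div_le_iff₀ hμ]
  calc |arctan (tanNegTwoPhi p)| ≤ |tanNegTwoPhi p| := abs_arctan_le_abs _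
    _ = |tanDiv p| * smallness p := by
      rw [tanNegTwoPhi, Pi.mul_apply, abs_mul, abs_of_pos hμ, mul_comm]

end Bounds

section ClosedForm

variable {p : Param}

theorem tanNegTwoPhi_eq (hp : p ∈ region) :
    tanNegTwoPhi p = 2 * (1 - tanhDefect p) * sin (2 * p.2.2) / (p.1 ^ 2 * denom p) := by
  have hA := fst_pos hp
  have hτ := coangle_pos hp
  have hE := denom_pos hp
  simp only [tanNegTwoPhi, tanDiv, smallness, sinDoubleDiv, coangleSqDivDenom, Pi.mul_apply,
    Pi.smul_apply, Pi.sub_apply, Pi.one_apply, smul_eq_mul, zpow_neg, zpow_ofNat]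
  field_simp

theorem tanNegTwoPhi_pos (hp : p ∈ region) : 0 < tanNegTwoPhi p := by
  have hA := fst_pos hp
  have hE := denom_pos hp
  have ht : 0 < 1 - tanhDefect p := sub_pos.2 (tanhDefect_lt_one hp)
  have hsin : 0 < sin (2 * p.2.2) :=
    sin_pos_of_pos_of_lt_pi (by linarith [hp.2.2.1]) (by linarith [hp.2.2.2.1])
  rw [tanNegTwoPhi_eq hp]
  positivity

theorem aCoef_mul_cot_add_bCoef_mul_tan (hp : p ∈ region) :
    aCoef p.1 p.2.1 * cot p.2.2 + bCoef p.1 p.2.1 * tan p.2.2 = (tanNegTwoPhi p)⁻¹ := by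
  have hA := fst_pos hp
  have hB := snd_pos hp
  have hsin : 0 < sin p.2.2 :=
    sin_pos_of_pos_of_lt_pi hp.2.2.1 (by linarith [hp.2.2.2.1, pi_pos])
  have hcos : 0 < cos p.2.2 :=
    cos_pos_of_mem_Ioo ⟨by linarith [hp.2.2.1, pi_pos], hp.2.2.2.1⟩
  have hB₄ : p.2.1 ^ 4 - 1 ≠ 0 := (sub_pos.2 (one_lt_pow₀ hp.2.1 four_ne_zero)).ne'
  have hgap : p.2.1 ^ 2 - p.2.1⁻¹ ^ 2 = (p.2.1 ^ 4 - 1) / p.2.1 ^ 2 := by field_simp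
  have htanh : 1 - 2 / (p.2.1 ^ 4 + 1) = (p.2.1 ^ 4 - 1) / (p.2.1 ^ 4 + 1) := by
    field_simp
    ring
  rw [tanNegTwoPhi_eq hp, inv_div, denom, tanhDefect, cosDouble, aCoef, bCoef, hgap, htanh,
    cot_eq_cos_div_sin, tan_eq_sin_div_cos, sin_two_mul, cos_two_mul, zpow_neg, zpow_ofNat]
  field_simp
  rw [sin_sq]
  ring

theorem phiS_eq_smallness_mul (hp : p ∈ region) :
    phiS p.1 p.2.1 p.2.2 = smallness p * (-(1 / 2) * rescaledPhi p) := by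
  have hμ := smallness_pos hp
  rw [phiS, aCoef_mul_cot_add_bCoef_mul_tan hp, arctan_inv_of_pos (tanNegTwoPhi_pos hp),
    rescaledPhi]
  field_simp
  ring

end ClosedForm

section EulerField

variable {U : Set Param} (α β γ : ℝ)

theorem hasLogDerivAlong_fst : HasLogDerivAlong U (eulerField α β γ) Prod.fst (fun _ => α) :=
  (HasDerivAlong.linearMap (LinearMap.fst ℝ ℝ (ℝ × ℝ))).congr_deriv fun p _ => mul_comm α p.1

theorem hasLogDerivAlong_snd :
    HasLogDerivAlong U (eulerField α β γ) (fun p => p.2.1) (fun _ => β) :=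
  (HasDerivAlong.linearMap (LinearMap.fst ℝ ℝ ℝ ∘ₗ LinearMap.snd ℝ ℝ (ℝ × ℝ))).congr_deriv
    fun p _ => mul_comm β p.2.1

theorem hasDerivAlong_angle :
    HasDerivAlong U (eulerField α β γ) (fun p => p.2.2) (fun p => γ * coangle p) :=
  HasDerivAlong.linearMap (LinearMap.snd ℝ ℝ ℝ ∘ₗ LinearMap.snd ℝ ℝ (ℝ × ℝ))

theorem hasLogDerivAlong_coangle :
    HasLogDerivAlong U (eulerField α β γ) coangle (fun _ => -γ) :=
  ((hasDerivAlong_angle α β γ).const_sub (π / 2)).congr_deriv fun p _ => by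
    simp only [Pi.neg_apply, Pi.mul_apply]
    ring

theorem hasLogDerivAlong_tanhDefect :
    HasLogDerivAlong U (eulerField α β γ) tanhDefect
      ((-4 * β) • (1 - (1 / 2 : ℝ) • tanhDefect)) := by
  have hφ (y : ℝ) : HasDerivAt (fun y : ℝ => 2 / (y ^ 4 + 1))
      (-(2 * (4 * y ^ 3)) / (y ^ 4 + 1) ^ 2) y := by
    simpa using
      (hasDerivAt_const y 2).fun_div ((hasDerivAt_pow 4 y).add_const 1) (by positivity)
  refine (HasDerivAlong.comp (hasLogDerivAlong_snd α β γ) fun p _ => hφ p.2.1).congr_deriv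
    fun p _ => ?_
  simp only [tanhDefect, Pi.mul_apply, Pi.smul_apply, Pi.sub_apply, Pi.one_apply, smul_eq_mul]
  field_simp
  ring

theorem hasLogDerivAlong_smallness :
    HasLogDerivAlong region (eulerField α β γ) smallness (fun _ => γ - 2 * α) :=
  (((hasLogDerivAlong_fst α β γ).zpow (-2) fun _ hp => (fst_pos hp).ne').mul
    ((hasLogDerivAlong_coangle α β γ).zpow (-1) fun _ hp => (coangle_pos hp).ne')).congr
    fun p _ => by
      simp only [Pi.add_apply]
      push_cast
      ring

theorem hasDerivAlong_cosDouble :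
    HasDerivAlong region (eulerField α β γ) cosDouble
      ((-2 * γ) • (sinDoubleDiv * coangle ^ 2)) :=
  ((hasDerivAlong_angle α β γ).comp (φ := fun x => cos (2 * x)) fun p _ =>
    ((hasDerivAt_id p.2.2).const_mul 2).cos).congr_deriv fun p hp => by
      have := coangle_pos hp
      simp only [sinDoubleDiv, Pi.mul_apply, Pi.smul_apply, Pi.pow_apply, smul_eq_mul, id]
      field_simp

theorem hasDerivAlong_sinDoubleDiv :
    HasDerivAlong region (eulerField α β γ) sinDoubleDiv
      (γ • ((2 : ℝ) • cosDouble + sinDoubleDiv)) := by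
  have hsin : HasDerivAlong region (eulerField α β γ) (fun p => sin (2 * p.2.2)) _ :=
    (hasDerivAlong_angle α β γ).comp (φ := fun x => sin (2 * x)) fun p _ =>
      ((hasDerivAt_id p.2.2).const_mul 2).sin
  have hinv := (hasLogDerivAlong_coangle α β γ).inv fun p hp => (coangle_pos hp).ne'
  refine (HasDerivAlong.mul hsin hinv).congr_deriv fun p hp => ?_
  have := coangle_pos hp
  simp only [sinDoubleDiv, cosDouble, Pi.mul_apply, Pi.smul_apply, Pi.add_apply, Pi.neg_apply,
    Pi.inv_apply, smul_eq_mul, id]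
  field_simp

/-- The logarithmic derivative of `denom` along `eulerField α β γ`. -/
noncomputable def denomLogDeriv : Param → ℝ :=
  (4 * α) • (smallness ^ 2 * coangleSqDivDenom * (1 - (1 - tanhDefect) * cosDouble)) +
    (4 * β) • ((1 - (1 / 2 : ℝ) • tanhDefect) * defectDivDenom *
      (1 + (smallness * coangle) ^ 2) * cosDouble) -
    (2 * γ) • ((1 - tanhDefect) * (1 + (smallness * coangle) ^ 2) * sinDoubleDiv *
      coangleSqDivDenom)

theorem hasLogDerivAlong_denom :
    HasLogDerivAlong region (eulerField α β γ) denom (denomLogDeriv α β γ) := by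
  have hr := (hasLogDerivAlong_fst α β γ).zpow (-4) fun p hp => (fst_pos hp).ne'
  have ht := (hasLogDerivAlong_tanhDefect (U := region) α β γ).const_sub 1
  have hc := hasDerivAlong_cosDouble α β γ
  refine ((hr.const_sub 1).add
    ((ht.mul ((HasDerivAlong.const 1).add hr)).mul hc)).congr_deriv fun p hp => ?_
  have := denom_pos hp
  simp only [denomLogDeriv, coangleSqDivDenom, defectDivDenom, Pi.mul_apply, Pi.smul_apply,
    Pi.add_apply, Pi.sub_apply, Pi.neg_apply, Pi.zero_apply, Pi.one_apply, Pi.pow_apply,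
    smul_eq_mul, fst_zpow_neg_four hp]
  push_cast
  field_simp
  ring

theorem hasLogDerivAlong_coangleSqDivDenom :
    HasLogDerivAlong region (eulerField α β γ) coangleSqDivDenom
      ((fun _ => -2 * γ) - denomLogDeriv α β γ) :=
  (((hasLogDerivAlong_coangle α β γ).zpow 2 fun _ hp => (coangle_pos hp).ne').mul
    ((hasLogDerivAlong_denom α β γ).inv fun _ hp => (denom_pos hp).ne')).congr fun p _ => by
      simp only [Pi.add_apply, Pi.neg_apply, Pi.sub_apply]
      push_cast
      ring

theorem hasLogDerivAlong_defectDivDenom :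
    HasLogDerivAlong region (eulerField α β γ) defectDivDenom
      ((-4 * β) • (1 - (1 / 2 : ℝ) • tanhDefect) + -denomLogDeriv α β γ) :=
  (hasLogDerivAlong_tanhDefect α β γ).mul
    ((hasLogDerivAlong_denom α β γ).inv fun _ hp => (denom_pos hp).ne')

end EulerField

section SymbolAlgebra

/-- The functions from which `tan (-2φ)` is built polynomially. -/
def baseGenerators : Set (Param → ℝ) :=
  {coangle, cosDouble, sinDoubleDiv, tanhDefect, smallness, coangleSqDivDenom, defectDivDenom}

/-- The algebra generated by `baseGenerators`: it consists of functions bounded on `region` and is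
stable under `eulerField α β γ`. -/
noncomputable def baseAlgebra : Subalgebra ℝ (Param → ℝ) := Algebra.adjoin ℝ baseGenerators

/-- The enlargement of `baseAlgebra` by the functions arising from derivatives of the arctangent,
with the same boundedness and stability properties. -/
noncomputable def symbolAlgebra : Subalgebra ℝ (Param → ℝ) :=
  Algebra.adjoin ℝ (baseGenerators ∪ {cosSqTwoPhi, rescaledPhi})

theorem baseAlgebra_le_symbolAlgebra : baseAlgebra ≤ symbolAlgebra :=
  Algebra.adjoin_mono Set.subset_union_left

theorem cosSqTwoPhi_mem_symbolAlgebra : cosSqTwoPhi ∈ symbolAlgebra :=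
  Algebra.subset_adjoin (by simp)

theorem rescaledPhi_mem_symbolAlgebra : rescaledPhi ∈ symbolAlgebra :=
  Algebra.subset_adjoin (by simp)

theorem const_mem {A : Subalgebra ℝ (Param → ℝ)} (c : ℝ) : (fun _ => c) ∈ A :=
  A.algebraMap_mem c

theorem coangle_mem_baseAlgebra : coangle ∈ baseAlgebra :=
  Algebra.subset_adjoin (by simp [baseGenerators])

theorem cosDouble_mem_baseAlgebra : cosDouble ∈ baseAlgebra :=
  Algebra.subset_adjoin (by simp [baseGenerators])

theorem sinDoubleDiv_mem_baseAlgebra : sinDoubleDiv ∈ baseAlgebra :=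
  Algebra.subset_adjoin (by simp [baseGenerators])

theorem tanhDefect_mem_baseAlgebra : tanhDefect ∈ baseAlgebra :=
  Algebra.subset_adjoin (by simp [baseGenerators])

theorem smallness_mem_baseAlgebra : smallness ∈ baseAlgebra :=
  Algebra.subset_adjoin (by simp [baseGenerators])

theorem coangleSqDivDenom_mem_baseAlgebra : coangleSqDivDenom ∈ baseAlgebra :=
  Algebra.subset_adjoin (by simp [baseGenerators])

theorem defectDivDenom_mem_baseAlgebra : defectDivDenom ∈ baseAlgebra :=
  Algebra.subset_adjoin (by simp [baseGenerators])

theorem tanDiv_mem_baseAlgebra : tanDiv ∈ baseAlgebra :=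
  Subalgebra.smul_mem _ (mul_mem (mul_mem (sub_mem (one_mem _) tanhDefect_mem_baseAlgebra)
    sinDoubleDiv_mem_baseAlgebra) coangleSqDivDenom_mem_baseAlgebra) _

theorem tanNegTwoPhi_mem_baseAlgebra : tanNegTwoPhi ∈ baseAlgebra :=
  mul_mem smallness_mem_baseAlgebra tanDiv_mem_baseAlgebra

theorem denomLogDeriv_mem_baseAlgebra (α β γ : ℝ) : denomLogDeriv α β γ ∈ baseAlgebra := by
  have ht := tanhDefect_mem_baseAlgebra
  have hc := cosDouble_mem_baseAlgebra
  have hμ := smallness_mem_baseAlgebra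
  have hq := coangleSqDivDenom_mem_baseAlgebra
  have hr : 1 + (smallness * coangle) ^ 2 ∈ baseAlgebra :=
    add_mem (one_mem _) (pow_mem (mul_mem hμ coangle_mem_baseAlgebra) 2)
  refine sub_mem (add_mem (Subalgebra.smul_mem _ ?_ _) (Subalgebra.smul_mem _ ?_ _))
    (Subalgebra.smul_mem _ ?_ _)
  · exact mul_mem (mul_mem (pow_mem hμ 2) hq)
      (sub_mem (one_mem _) (mul_mem (sub_mem (one_mem _) ht) hc))
  · exact mul_mem (mul_mem (mul_mem (sub_mem (one_mem _) (Subalgebra.smul_mem _ ht _))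
      defectDivDenom_mem_baseAlgebra) hr) hc
  · exact mul_mem (mul_mem (mul_mem (sub_mem (one_mem _) ht) hr) sinDoubleDiv_mem_baseAlgebra) hq

theorem exists_hasDerivAlong_of_mem_baseGenerators (α β γ : ℝ) {s : Param → ℝ}
    (hs : s ∈ baseGenerators) :
    ∃ s' ∈ baseAlgebra, HasDerivAlong region (eulerField α β γ) s s' := by
  have hsA : s ∈ baseAlgebra := Algebra.subset_adjoin hs
  have hG := denomLogDeriv_mem_baseAlgebra α β γ
  have hT : (-4 * β) • (1 - (1 / 2 : ℝ) • tanhDefect) ∈ baseAlgebra :=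
    Subalgebra.smul_mem _ (sub_mem (one_mem _)
      (Subalgebra.smul_mem _ tanhDefect_mem_baseAlgebra _)) _
  rcases hs with rfl | rfl | rfl | rfl | rfl | rfl | rfl
  · exact ⟨_, mul_mem hsA (const_mem _), hasLogDerivAlong_coangle α β γ⟩
  · exact ⟨_, Subalgebra.smul_mem _ (mul_mem sinDoubleDiv_mem_baseAlgebra
      (pow_mem coangle_mem_baseAlgebra 2)) _, hasDerivAlong_cosDouble α β γ⟩
  · exact ⟨_, Subalgebra.smul_mem _ (add_mem (Subalgebra.smul_mem _ cosDouble_mem_baseAlgebra _)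
      hsA) _, hasDerivAlong_sinDoubleDiv α β γ⟩
  · exact ⟨_, mul_mem hsA hT, hasLogDerivAlong_tanhDefect α β γ⟩
  · exact ⟨_, mul_mem hsA (const_mem _), hasLogDerivAlong_smallness α β γ⟩
  · exact ⟨_, mul_mem hsA (sub_mem (const_mem _) hG),
      hasLogDerivAlong_coangleSqDivDenom α β γ⟩
  · exact ⟨_, mul_mem hsA (add_mem hT (neg_mem hG)), hasLogDerivAlong_defectDivDenom α β γ⟩

theorem hasLogDerivAlong_cosSqTwoPhi {U : Set Param} {V : Param → Param} {y' : Param → ℝ}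
    (hy : HasDerivAlong U V tanNegTwoPhi y') :
    HasLogDerivAlong U V cosSqTwoPhi ((-2 : ℝ) • (tanNegTwoPhi * y' * cosSqTwoPhi)) := by
  have hlog : HasLogDerivAlong U V (fun p => 1 + tanNegTwoPhi p ^ 2)
      ((2 : ℝ) • (tanNegTwoPhi * y' * cosSqTwoPhi)) := by
    refine (hy.comp (φ := fun y => 1 + y ^ 2) fun p _ =>
      (hasDerivAt_pow 2 (tanNegTwoPhi p)).const_add 1).congr_deriv fun p _ => ?_
    have : 0 < 1 + tanNegTwoPhi p ^ 2 := by positivity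
    simp only [cosSqTwoPhi, Pi.mul_apply, Pi.smul_apply, smul_eq_mul]
    field_simp
    push_cast
    ring
  exact (hlog.inv fun p _ => by positivity).congr fun p _ => by
    simp only [Pi.neg_apply, Pi.smul_apply, smul_eq_mul]
    ring

theorem hasDerivAlong_rescaledPhi {V : Param → Param} {m z' : Param → ℝ}
    (hμ : HasLogDerivAlong region V smallness m) (hz : HasDerivAlong region V tanDiv z') :
    HasDerivAlong region V rescaledPhi
      ((m * tanDiv + z') * cosSqTwoPhi - m * rescaledPhi) := by
  have hy := HasDerivAlong.mul hμ hz
  have harctan := hy.comp (φ := arctan) fun p _ => hasDerivAt_arctan _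
  have hinv := hμ.inv fun p hp => (smallness_pos hp).ne'
  refine (harctan.mul hinv).congr_deriv fun p hp => ?_
  have := smallness_pos hp
  simp only [rescaledPhi, cosSqTwoPhi, tanNegTwoPhi, Pi.mul_apply, Pi.add_apply, Pi.sub_apply,
    Pi.neg_apply, Pi.inv_apply]
  field_simp
  ring

theorem exists_hasDerivAlong_of_mem_symbolAlgebra (α β γ : ℝ) {f : Param → ℝ}
    (hf : f ∈ symbolAlgebra) :
    ∃ f' ∈ symbolAlgebra, HasDerivAlong region (eulerField α β γ) f f' := by
  have exists_of_mem_base {f : Param → ℝ} (hf : f ∈ baseAlgebra) :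
      ∃ f' ∈ baseAlgebra, HasDerivAlong region (eulerField α β γ) f f' :=
    HasDerivAlong.exists_of_mem_adjoin
      (fun _ => exists_hasDerivAlong_of_mem_baseGenerators α β γ) hf
  have hle {f : Param → ℝ} (hf : f ∈ baseAlgebra) := baseAlgebra_le_symbolAlgebra hf
  refine HasDerivAlong.exists_of_mem_adjoin (fun s hs => ?_) hf
  rcases hs with hs | rfl | rfl
  · obtain ⟨s', hs', hder⟩ := exists_hasDerivAlong_of_mem_baseGenerators α β γ hs
    exact ⟨s', hle hs', hder⟩
  · obtain ⟨y', hy', hder⟩ := exists_of_mem_base tanNegTwoPhi_mem_baseAlgebra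
    refine ⟨_, mul_mem cosSqTwoPhi_mem_symbolAlgebra (Subalgebra.smul_mem _ (mul_mem ?_
      cosSqTwoPhi_mem_symbolAlgebra) _), hasLogDerivAlong_cosSqTwoPhi hder⟩
    exact mul_mem (hle tanNegTwoPhi_mem_baseAlgebra) (hle hy')
  · obtain ⟨z', hz', hder⟩ := exists_of_mem_base tanDiv_mem_baseAlgebra
    refine ⟨_, sub_mem (mul_mem (add_mem ?_ (hle hz')) cosSqTwoPhi_mem_symbolAlgebra) ?_,
      hasDerivAlong_rescaledPhi (hasLogDerivAlong_smallness α β γ) hder⟩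
    · exact mul_mem (const_mem _) (hle tanDiv_mem_baseAlgebra)
    · exact mul_mem (const_mem _) rescaledPhi_mem_symbolAlgebra

theorem isBigO_one_of_abs_le {f : Param → ℝ} (C : ℝ) (h : ∀ p ∈ region, |f p| ≤ C) :
    f =O[𝓟 region] (1 : Param → ℝ) :=
  Asymptotics.isBigO_principal.2 ⟨C, fun p hp => by simpa using h p hp⟩

theorem isBigO_one_of_mem_baseAlgebra {f : Param → ℝ} (hf : f ∈ baseAlgebra) :
    f =O[𝓟 region] (1 : Param → ℝ) := by
  refine isBigO_one_of_mem_adjoin (fun s hs => ?_) hf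
  rcases hs with rfl | rfl | rfl | rfl | rfl | rfl | rfl
  · exact isBigO_one_of_abs_le (π / 2) fun p hp =>
      (abs_of_pos (coangle_pos hp)).trans_le (coangle_lt_pi_div_two hp).le
  · exact isBigO_one_of_abs_le 1 fun p _ => abs_cos_le_one _
  · exact isBigO_one_of_abs_le 2 fun p => abs_sinDoubleDiv_le
  · exact isBigO_one_of_abs_le 1 fun p hp =>
      (abs_of_pos (tanhDefect_pos p)).trans_le (tanhDefect_lt_one hp).le
  · exact isBigO_one_of_abs_le (1 / 4) fun p hp =>
      (abs_of_pos (smallness_pos hp)).trans_le (smallness_lt hp).le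
  · exact isBigO_one_of_abs_le 5 fun p => abs_coangleSqDivDenom_le
  · exact isBigO_one_of_abs_le 2 fun p => abs_defectDivDenom_le

theorem isBigO_one_of_mem_symbolAlgebra {f : Param → ℝ} (hf : f ∈ symbolAlgebra) :
    f =O[𝓟 region] (1 : Param → ℝ) := by
  refine isBigO_one_of_mem_adjoin (fun s hs => ?_) hf
  rcases hs with hs | rfl | rfl
  · exact isBigO_one_of_mem_baseAlgebra (Algebra.subset_adjoin hs)
  · exact isBigO_one_of_abs_le 1 fun p _ => abs_cosSqTwoPhi_le p
  · refine .trans (.of_bound' ?_) (isBigO_one_of_mem_baseAlgebra tanDiv_mem_baseAlgebra)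
    exact Filter.eventually_principal.2 fun p => abs_rescaledPhi_le

end SymbolAlgebra

section IsSymbol

/-- The size of the derivative of order `(i, j, k)` in `(θ, λ_A, λ_B)` in the final estimate. -/
noncomputable def weight (i j k : ℕ) (p : Param) : ℝ :=
  coangle p ^ (-(i : ℤ) - 1) * p.1 ^ (-2 - (j : ℤ)) * p.2.1 ^ (-(k : ℤ))

/-- `f` is `weight i j k` times an element of the symbol algebra on `region`. -/
def IsSymbol (i j k : ℕ) (f : Param → ℝ) : Prop :=
  ∃ g ∈ symbolAlgebra, Set.EqOn f (weight i j k * g) region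

theorem weight_pos (i j k : ℕ) {p : Param} (hp : p ∈ region) : 0 < weight i j k p := by
  have := fst_pos hp
  have := snd_pos hp
  have := coangle_pos hp
  unfold weight
  positivity

theorem hasLogDerivAlong_weight (i j k : ℕ) (α β γ : ℝ) :
    HasLogDerivAlong region (eulerField α β γ) (weight i j k)
      (fun _ => (i + 1) * γ - (j + 2) * α - k * β) :=
  ((((hasLogDerivAlong_coangle α β γ).zpow _ fun _ hp => (coangle_pos hp).ne').mul
    ((hasLogDerivAlong_fst α β γ).zpow _ fun _ hp => (fst_pos hp).ne')).mul
    ((hasLogDerivAlong_snd α β γ).zpow _ fun _ hp => (snd_pos hp).ne')).congr fun p _ => by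
      simp only [Pi.add_apply]
      push_cast
      ring

namespace IsSymbol

variable {i j k : ℕ} {f : Param → ℝ}

theorem exists_hasDerivAlong (α β γ : ℝ) (hf : IsSymbol i j k f) :
    ∃ f', IsSymbol i j k f' ∧ HasDerivAlong region (eulerField α β γ) f f' := by
  obtain ⟨g, hg, hfg⟩ := hf
  obtain ⟨g', hg', hder⟩ := exists_hasDerivAlong_of_mem_symbolAlgebra α β γ hg
  refine ⟨_, ⟨(fun _ => (i + 1) * γ - (j + 2) * α - k * β) * g + g',
    add_mem (mul_mem (const_mem _) hg) hg', fun p _ => ?_⟩,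
    (HasDerivAlong.mul (hasLogDerivAlong_weight i j k α β γ) hder).congr_of_eqOn
      isOpen_region hfg⟩
  simp only [Pi.mul_apply, Pi.add_apply]
  ring

theorem of_eq_div {i' j' k' : ℕ} {f' c : Param → ℝ} (hf : IsSymbol i j k f)
    (hf' : ∀ p ∈ region, f' p = f p / c p)
    (hw : ∀ p ∈ region, weight i' j' k' p = weight i j k p / c p) : IsSymbol i' j' k' f' := by
  obtain ⟨g, hg, hfg⟩ := hf
  refine ⟨g, hg, fun p hp => ?_⟩
  rw [hf' p hp, hfg hp, Pi.mul_apply, Pi.mul_apply, hw p hp]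
  ring

theorem deriv_fst (hf : IsSymbol i j k f) :
    IsSymbol i (j + 1) k (fun p => deriv (fun x => f (x, p.2)) p.1) := by
  obtain ⟨f', hf', hder⟩ := hf.exists_hasDerivAlong 1 0 0
  refine hf'.of_eq_div (c := Prod.fst) (fun p hp => ?_) (fun p hp => ?_)
  · have hline : HasLineDerivAt ℝ f (f' p) p (p.1 • (1, 0, 0)) := by
      simpa [eulerField] using hder p hp
    simpa [Prod.add_def] using deriv_comp_line hline (fst_pos hp).ne' p.1
  · rw [weight, weight, Nat.cast_succ, ← sub_sub, zpow_sub_one₀ (fst_pos hp).ne']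
    ring

theorem deriv_snd (hf : IsSymbol i j k f) :
    IsSymbol i j (k + 1) (fun p => deriv (fun x => f (p.1, x, p.2.2)) p.2.1) := by
  obtain ⟨f', hf', hder⟩ := hf.exists_hasDerivAlong 0 1 0
  refine hf'.of_eq_div (c := fun p => p.2.1) (fun p hp => ?_) (fun p hp => ?_)
  · have hline : HasLineDerivAt ℝ f (f' p) p (p.2.1 • (0, 1, 0)) := by
      simpa [eulerField] using hder p hp
    simpa [Prod.add_def] using deriv_comp_line hline (snd_pos hp).ne' p.2.1
  · rw [weight, weight, Nat.cast_succ, neg_add', zpow_sub_one₀ (snd_pos hp).ne']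
    ring

theorem deriv_angle (hf : IsSymbol i j k f) :
    IsSymbol (i + 1) j k (fun p => deriv (fun x => f (p.1, p.2.1, x)) p.2.2) := by
  obtain ⟨f', hf', hder⟩ := hf.exists_hasDerivAlong 0 0 1
  refine hf'.of_eq_div (c := coangle) (fun p hp => ?_) (fun p hp => ?_)
  · have hline : HasLineDerivAt ℝ f (f' p) p (coangle p • (0, 0, 1)) := by
      simpa [eulerField, coangle] using hder p hp
    simpa [Prod.add_def] using deriv_comp_line hline (coangle_pos hp).ne' p.2.2
  · rw [weight, weight, Nat.cast_succ, neg_add', zpow_sub_one₀ (coangle_pos hp).ne']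
    ring

theorem exists_abs_le (hf : IsSymbol i j k f) :
    ∃ C > 0, ∀ p ∈ region, |f p| ≤ C * weight i j k p := by
  obtain ⟨g, hg, hfg⟩ := hf
  obtain ⟨C, hC, hbound⟩ := (isBigO_one_of_mem_symbolAlgebra hg).exists_pos
  refine ⟨C, hC, fun p hp => ?_⟩
  have hgp : |g p| ≤ C := by
    simpa using Filter.eventually_principal.1 hbound.bound p hp
  have hw := weight_pos i j k hp
  rw [hfg hp, Pi.mul_apply, abs_mul, abs_of_pos hw, mul_comm]
  gcongr

end IsSymbol

theorem isSymbol_phiS : IsSymbol 0 0 0 (fun p => phiS p.1 p.2.1 p.2.2) :=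
  ⟨_, Subalgebra.smul_mem _ rescaledPhi_mem_symbolAlgebra (-(1 / 2) : ℝ), fun p hp => by
    simp [phiS_eq_smallness_mul hp, weight, smallness, mul_comm (coangle p)⁻¹]⟩

theorem isSymbol_iteratedDeriv_phiS (i j k : ℕ) :
    IsSymbol i j k (fun p => iteratedDeriv i (fun θ => iteratedDeriv j
      (fun a => iteratedDeriv k (fun b => phiS a b θ) p.2.1) p.1) p.2.2) := by
  induction i with
  | succ i ih => simpa only [iteratedDeriv_succ (n := i)] using ih.deriv_angle
  | zero =>
    simp only [iteratedDeriv_zero]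
    induction j with
    | succ j ih => simpa only [iteratedDeriv_succ (n := j)] using ih.deriv_fst
    | zero =>
      simp only [iteratedDeriv_zero]
      induction k with
      | succ k ih => simpa only [iteratedDeriv_succ (n := k)] using ih.deriv_snd
      | zero => simpa only [iteratedDeriv_zero] using isSymbol_phiS

end IsSymbol

end phiS

theorem phi_partial_derivative_bounds (i j k : ℕ) (hijk : 1 ≤ i + j + k) :
    ∃ C : ℝ, 0 < C ∧ ∃ ε : ℝ, 0 < ε ∧ ε < 1 ∧
      ∀ lA lB θ : ℝ, 1 < lA → 1 < lB → 0 < θ → θ < π / 2 →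
        (π / 2 - θ)⁻¹ ≤ ε * lA ^ 2 →
        |iteratedDeriv i
            (fun θ' => iteratedDeriv j
              (fun a => iteratedDeriv k (fun b => phiS a b θ') lB) lA) θ| ≤
          C * (π / 2 - θ) ^ (-(i : ℤ) - 1) * lA ^ (-2 - (j : ℤ)) * lB ^ (-(k : ℤ)) := by
  obtain ⟨C, hC, hbound⟩ := (phiS.isSymbol_iteratedDeriv_phiS i j k).exists_abs_le
  refine ⟨C, hC, 1 / 5, by norm_num, by norm_num, fun lA lB θ hA hB hθ₀ hθ₁ hε => ?_⟩
  have hτ : 0 < π / 2 - θ := sub_pos.2 hθ₁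
  have hlarge : 4 < lA ^ 2 * (π / 2 - θ) := by
    rw [inv_le_iff_one_le_mul₀ hτ] at hε
    linarith
  have hmem : (lA, lB, θ) ∈ phiS.region := ⟨one_pos.trans hA, hB, hθ₀, hθ₁, hlarge⟩
  simpa only [phiS.weight, phiS.coangle, mul_assoc] using hbound _ hmem
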